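/- Call a word over Γ well-placed if every letter in an even position (positions numbered from 1) belongs to {s, v}. If w is a well-placed word over Γ and w' is obtained from w by a one-step reduction, then w' is well-placed. (Consequently, in the reduction process of Algorithm 1 every letter at an even position is s or v at every stage, and after all letters v are eliminated every letter at an even position is s.) -/

import Mathlib

/-!
A reduction at a factor `X v Y` leaves the letters before it in place and moves the letters after
it by two positions, so all surviving letters keep the parity of their position. The only new
letter is `Red X Y`, at the position of `X`. If that position is even, so is that of `Y`, two
places later; well-placedness together with `X, Y ∈ {L, R, s}` forces `X = Y = s`, and
`Red s s = v`.
-/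

/-- The boundary alphabet Γ = {L, R, s, v}. -/
inductive GammaLetter : Type
  | L | R | s | v
deriving DecidableEq

/-- The reduction table: RvR ↦ s, LvL ↦ s, RvL ↦ v, LvR ↦ v, svR ↦ L, svL ↦ R,
Rvs ↦ L, Lvs ↦ R, svs ↦ v.  (`Red X Y` is the value on the triple X v Y.) -/
def Red : GammaLetter → GammaLetter → GammaLetter
  | .R, .R => .s
  | .L, .L => .s
  | .R, .L => .v
  | .L, .R => .v
  | .s, .R => .L
  | .s, .L => .R
  | .R, .s => .L
  | .L, .s => .R
  | .s, .s => .v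
  | _, _ => .v

/-- The involution on Γ interchanging L and R and fixing s and v. -/
def swapLR : GammaLetter → GammaLetter
  | .L => .R
  | .R => .L
  | x => x

/-- One-step reduction: replace a factor X v Y (X, Y ∈ {L, R, s}) by Red(XvY). -/
def StepRed (w w' : List GammaLetter) : Prop :=
  ∃ (u t : List GammaLetter) (X Y : GammaLetter),
    (X = GammaLetter.L ∨ X = GammaLetter.R ∨ X = GammaLetter.s) ∧
    (Y = GammaLetter.L ∨ Y = GammaLetter.R ∨ Y = GammaLetter.s) ∧
    w = u ++ [X, GammaLetter.v, Y] ++ t ∧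
    w' = u ++ [Red X Y] ++ t

/-- A word over Γ is well-placed if every letter in an even position (positions
numbered from 1, i.e. at an odd index numbered from 0) belongs to {s, v}. -/
def WellPlaced (w : List GammaLetter) : Prop :=
  ∀ (i : ℕ) (h : i < w.length), Odd i →
    (w[i] = GammaLetter.s ∨ w[i] = GammaLetter.v)

/-- One-step reduction preserves well-placedness. -/
theorem stepRed_wellPlaced (w w' : List GammaLetter)
    (hw : WellPlaced w) (h : StepRed w w') : WellPlaced w' := by
  obtain ⟨u, t, X, Y, hX, hY, rfl, rfl⟩ := h
  -- Rephrase in terms of `getElem?`, where indexing into appends needs no bound proofs.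
  have key : ∀ (i : ℕ) (a : GammaLetter), Odd i →
      (u ++ [X, GammaLetter.v, Y] ++ t)[i]? = some a →
      a = GammaLetter.s ∨ a = GammaLetter.v := by
    intro i a hi ha
    obtain ⟨hlt, rfl⟩ := List.getElem?_eq_some_iff.mp ha
    exact hw i hlt hi
  intro i hi hodd
  obtain ⟨a, ha⟩ : ∃ a, (u ++ [Red X Y] ++ t)[i] = a := ⟨_, rfl⟩
  rw [ha]
  have hget : (u ++ [Red X Y] ++ t)[i]? = some a :=
    List.getElem?_eq_some_iff.mpr ⟨hi, ha⟩
  rw [List.append_assoc] at hget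
  rcases lt_trichotomy i u.length with hlt | heq | hgt
  · apply key i a hodd
    rw [List.append_assoc, List.getElem?_append_left hlt]
    rwa [List.getElem?_append_left hlt] at hget
  · -- `X` and `Y` both sit at even positions, so `X = Y = s` and the new letter is `v`.
    subst heq
    have h1 := key u.length X hodd (by simp)
    have h2 := key (u.length + 2) Y (by grind) (by simp)
    have hXs : X = GammaLetter.s := by
      rcases hX with rfl | rfl | rfl <;> simp_all
    have hYs : Y = GammaLetter.s := by
      rcases hY with rfl | rfl | rfl <;> simp_all
    subst hXs hYs
    right
    simpa [Red] using hget.symm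
  · -- Letters of `t` come from index `i + 2`, which has the same parity as `i`.
    apply key (i + 2) a (by grind)
    obtain ⟨k, rfl⟩ : ∃ k, i = u.length + (k + 1) := ⟨i - u.length - 1, by omega⟩
    rw [List.append_assoc, List.getElem?_append_right (by omega)]
    rw [List.getElem?_append_right (by omega)] at hget
    have e1 : u.length + (k + 1) + 2 - u.length = k + 3 := by omega
    have e2 : u.length + (k + 1) - u.length = k + 1 := by omega
    rw [e1]
    rw [e2] at hget
    simpa using hget
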